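/- arXiv:2503.04564 — 2 statements merged into one kernel-verified Lean document; each statement's English description precedes it below -/
import Mathlib

section
/- In the cyclic hierarchical secure aggregation model (no security constraints needed), for every user k ∈ {1,…,K}: H({Y_i}_{i∈B_k} | {W_{k'}, Z_{k'}}_{k'∈{1,…,K}∖{k}}) ≥ L. -/
/-!
Fix a user `k`, let `V` be the family of relay messages `Y i` with `i ∈ B_k`, and let `G` be the
family of inputs and keys of the users other than `k`.

On the support of `p`, the pair `(V, G)` determines `W k`. Indeed a relay `i ∉ B_k` hears only
users other than `k`, so its message is a function of `G`; hence `(V, G)` determines every relay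
message, so also `∑ j, W j`, and subtracting the inputs contained in `G` leaves `W k`. Entropy does
not increase under functions, so `H(V, G) ≥ H(W k, G)`. Since `W k` is uniform and independent of
`G`, `H(W k, G) = L + H(G)`, and subtracting `H(G)` gives the bound.

Vanishing conditional entropies are converted to honest functional dependence on the support of `p`
(`eq_of_condEnt_eq_zero`), and functional dependence is converted back into an entropy inequality
(`ent_le_ent_of_determines`). Both rest on writing the entropy as the average over `ω` of
`-logb q (pr p X (X ω))`. The uniformity and independence of `W k` given `G` is `pr_input_rest`.
-/

open scoped BigOperators

noncomputable def pr {Ω : Type} [Fintype Ω] {α : Type} [DecidableEq α]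
    (p : Ω → ℝ) (X : Ω → α) (a : α) : ℝ :=
  ∑ ω, if X ω = a then p ω else 0

noncomputable def ent {Ω : Type} [Fintype Ω] {α : Type} [Fintype α] [DecidableEq α]
    (q : ℕ) (p : Ω → ℝ) (X : Ω → α) : ℝ :=
  -∑ a, pr p X a * Real.logb q (pr p X a)

noncomputable def condEnt {Ω : Type} [Fintype Ω] {α β : Type}
    [Fintype α] [DecidableEq α] [Fintype β] [DecidableEq β]
    (q : ℕ) (p : Ω → ℝ) (X : Ω → α) (Y : Ω → β) : ℝ :=
  ent q p (fun ω => (X ω, Y ω)) - ent q p Y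

noncomputable def mutInfo {Ω : Type} [Fintype Ω] {α β : Type}
    [Fintype α] [DecidableEq α] [Fintype β] [DecidableEq β]
    (q : ℕ) (p : Ω → ℝ) (X : Ω → α) (Y : Ω → β) : ℝ :=
  ent q p X + ent q p Y - ent q p (fun ω => (X ω, Y ω))

noncomputable def condMutInfo {Ω : Type} [Fintype Ω] {α β γ : Type}
    [Fintype α] [DecidableEq α] [Fintype β] [DecidableEq β] [Fintype γ] [DecidableEq γ]
    (q : ℕ) (p : Ω → ℝ) (X : Ω → α) (Y : Ω → β) (Z : Ω → γ) : ℝ :=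
  condEnt q p X Z + condEnt q p Y Z - condEnt q p (fun ω => (X ω, Y ω)) Z

def IsPMF {Ω : Type} [Fintype Ω] (p : Ω → ℝ) : Prop :=
  (∀ ω, 0 ≤ p ω) ∧ ∑ ω, p ω = 1

def IndepRV {Ω : Type} [Fintype Ω] {α β : Type} [DecidableEq α] [DecidableEq β]
    (p : Ω → ℝ) (X : Ω → α) (Y : Ω → β) : Prop :=
  ∀ a b, pr p (fun ω => (X ω, Y ω)) (a, b) = pr p X a * pr p Y b

/-- The set of `B` relays `{k, k+1, …, k+B−1}` (indices mod `K`) associated with user `k`. -/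
def Bset (K B : ℕ) (k : Fin K) : Finset (Fin K) :=
  (Finset.range B).image fun j => ⟨((k : ℕ) + j) % K, Nat.mod_lt _ k.pos⟩

/-- The set of users associated with relay `i`. -/
def Uset (K B : ℕ) (i : Fin K) : Finset (Fin K) :=
  Finset.univ.filter fun k => i ∈ Bset K B k

section Entropy

variable {Ω : Type} [Fintype Ω] {α β : Type}

/-- The entropy is the expected surprisal: a sum over outcomes `ω` instead of values of `X`. -/
lemma ent_eq_sum_outcomes [Fintype α] [DecidableEq α] (q : ℕ) (p : Ω → ℝ) (X : Ω → α) :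
    ent q p X = -∑ ω, p ω * Real.logb q (pr p X (X ω)) := by
  unfold ent
  congr 1
  have h : ∀ a, pr p X a * Real.logb q (pr p X a)
      = ∑ ω, if X ω = a then p ω * Real.logb q (pr p X a) else 0 := by
    intro a
    conv_lhs => enter [1]; unfold pr
    rw [Finset.sum_mul]
    exact Finset.sum_congr rfl fun ω _ => by split_ifs <;> simp
  simp_rw [h]
  rw [Finset.sum_comm]
  exact Finset.sum_congr rfl fun ω _ => by simp

lemma pr_self_pos [DecidableEq α] {p : Ω → ℝ} (hp : ∀ ω, 0 ≤ p ω) (X : Ω → α) {ω : Ω}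
    (hω : 0 < p ω) : 0 < pr p X (X ω) := by
  refine Finset.sum_pos' (fun ω' _ => ?_) ⟨ω, Finset.mem_univ _, by simpa using hω⟩
  split_ifs
  exacts [hp ω', le_rfl]

lemma pr_le_pr_of_determines [DecidableEq α] [DecidableEq β] {p : Ω → ℝ} (hp : ∀ ω, 0 ≤ p ω)
    (X : Ω → α) (X' : Ω → β) {ω : Ω}
    (h : ∀ ω', 0 < p ω' → X ω' = X ω → X' ω' = X' ω) :
    pr p X (X ω) ≤ pr p X' (X' ω) := by
  refine Finset.sum_le_sum fun ω' _ => ?_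
  rcases (hp ω').eq_or_lt with h0 | h0
  · simp [← h0]
  · by_cases hx : X ω' = X ω
    · simp [hx, h ω' h0 hx]
    · rw [if_neg hx]
      split_ifs
      exacts [h0.le, le_rfl]

/-- If `X` determines `X'` on the support of `p`, then `X'` has at most the entropy of `X`. -/
lemma ent_le_ent_of_determines [Fintype α] [DecidableEq α] [Fintype β] [DecidableEq β]
    {q : ℕ} (hq : 1 < q) {p : Ω → ℝ} (hp : ∀ ω, 0 ≤ p ω) (X : Ω → α) (X' : Ω → β)
    (h : ∀ ω ω', 0 < p ω → 0 < p ω' → X ω' = X ω → X' ω' = X' ω) :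
    ent q p X' ≤ ent q p X := by
  rw [ent_eq_sum_outcomes, ent_eq_sum_outcomes, neg_le_neg_iff]
  refine Finset.sum_le_sum fun ω _ => ?_
  rcases (hp ω).eq_or_lt with h0 | h0
  · simp [← h0]
  · exact mul_le_mul_of_nonneg_left
      (Real.logb_le_logb_of_le (by exact_mod_cast hq) (pr_self_pos hp X h0)
        (pr_le_pr_of_determines hp X X' fun ω' h' hx => h ω ω' h0 h' hx)) h0.le

/-- If `H(X | Y) = 0`, then `Y` determines `X` on the support of `p`. -/
lemma eq_of_condEnt_eq_zero [Fintype α] [DecidableEq α] [Fintype β] [DecidableEq β]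
    {q : ℕ} (hq : 1 < q) {p : Ω → ℝ} (hp : ∀ ω, 0 ≤ p ω) {X : Ω → α} {Y : Ω → β}
    (h : condEnt q p X Y = 0) {ω ω' : Ω} (hω : 0 < p ω) (hω' : 0 < p ω')
    (hY : Y ω' = Y ω) : X ω' = X ω := by
  have hq' : (1 : ℝ) < q := by exact_mod_cast hq
  set XY : Ω → α × β := fun ω => (X ω, Y ω) with hXY
  have hle : ∀ ω, pr p XY (XY ω) ≤ pr p Y (Y ω) := fun ω =>
    pr_le_pr_of_determines hp XY Y fun ω' _ he => congrArg Prod.snd he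
  have hterm : ∀ ω ∈ Finset.univ, 0 ≤ p ω * Real.logb q (pr p Y (Y ω))
      - p ω * Real.logb q (pr p XY (XY ω)) := by
    intro ω _
    rcases (hp ω).eq_or_lt with h0 | h0
    · simp [← h0]
    · exact sub_nonneg.2 (mul_le_mul_of_nonneg_left
        (Real.logb_le_logb_of_le hq' (pr_self_pos hp XY h0) (hle ω)) h0.le)
  have hsum : ∑ ω, (p ω * Real.logb q (pr p Y (Y ω))
      - p ω * Real.logb q (pr p XY (XY ω))) = 0 := by
    rw [condEnt, ent_eq_sum_outcomes, ent_eq_sum_outcomes] at h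
    rw [Finset.sum_sub_distrib]
    linarith
  have h0 := (Finset.sum_eq_zero_iff_of_nonneg hterm).1 hsum ω (Finset.mem_univ _)
  have hlog : Real.logb q (pr p Y (Y ω)) = Real.logb q (pr p XY (XY ω)) :=
    mul_left_cancel₀ hω.ne' (sub_eq_zero.1 h0)
  have heq : pr p Y (Y ω) = pr p XY (XY ω) :=
    Real.logb_injOn_pos hq' (pr_self_pos hp Y hω) (pr_self_pos hp XY hω) hlog
  -- If `X ω' ≠ X ω`, then `ω'` contributes `p ω' > 0` to the left side of `heq` only.
  by_contra hne
  refine absurd heq (ne_of_gt (Finset.sum_lt_sum (fun ω'' _ => ?_) ⟨ω', Finset.mem_univ _, ?_⟩))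
  · by_cases hy : Y ω'' = Y ω
    · rw [if_pos hy]
      split_ifs
      exacts [le_rfl, hp ω'']
    · simp [hXY, hy]
  · simp [hXY, hY, hne, hω']

end Entropy

/-- The input of user `k` is uniform given the inputs and keys of all other users. The joint
probability does not depend on the value `w`, because by independence it is the constant
probability of a full input vector times the probability of the keys of the other users. -/
lemma pr_input_rest {K L : ℕ} {F : Type} [Fintype F] [DecidableEq F]
    {Ω : Type} [Fintype Ω] {p : Ω → ℝ} {ζ : Type} [Fintype ζ] [DecidableEq ζ]
    {W : Fin K → Ω → (Fin L → F)} {Z : Fin K → Ω → ζ} {c : ℝ}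
    (hW : ∀ w : Fin K → Fin L → F, pr p (fun ω => fun k => W k ω) w = c)
    (hWZ : IndepRV p (fun ω => fun k => W k ω) (fun ω => fun k => Z k ω))
    (k : Fin K) (w : Fin L → F) (g : {k' : Fin K // k' ≠ k} → (Fin L → F) × ζ) :
    pr p (fun ω => fun k' : {k' : Fin K // k' ≠ k} => (W k'.1 ω, Z k'.1 ω)) g
      = (Fintype.card F : ℝ) ^ L *
        pr p (fun ω => (W k ω,
          fun k' : {k' : Fin K // k' ≠ k} => (W k'.1 ω, Z k'.1 ω))) (w, g) := by
  classical
  set G : Ω → {k' : Fin K // k' ≠ k} → (Fin L → F) × ζ := fun ω k' => (W k'.1 ω, Z k'.1 ω)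
    with hG
  have hjoint : ∀ v : Fin L → F, pr p (fun ω => (W k ω, G ω)) (v, g)
      = ∑ z : Fin K → ζ, if ∀ k' : {k' : Fin K // k' ≠ k}, z k'.1 = (g k').2
          then c * pr p (fun ω => fun k => Z k ω) z else 0 := by
    intro v
    set u : Fin K → Fin L → F := fun j => if h : j = k then v else (g ⟨j, h⟩).1 with hu
    have hiff : ∀ ω, (W k ω, G ω) = (v, g) ↔
        (fun j => W j ω) = u ∧ ∀ k' : {k' : Fin K // k' ≠ k}, Z k'.1 ω = (g k').2 := by
      intro ω
      constructor
      · intro h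
        obtain ⟨h1, h2⟩ := Prod.mk.inj h
        refine ⟨funext fun j => ?_, fun k' => congrArg Prod.snd (congrFun h2 k')⟩
        by_cases hj : j = k
        · subst hj; simpa [hu] using h1
        · simpa [hu, hj] using congrArg Prod.fst (congrFun h2 ⟨j, hj⟩)
      · rintro ⟨h1, h2⟩
        refine Prod.ext ?_ (funext fun k' => Prod.ext ?_ (h2 k'))
        · simpa [hu] using congrFun h1 k
        · simpa [hu, k'.2] using congrFun h1 k'.1
    have hz : ∀ z : Fin K → ζ,
        (if ∀ k' : {k' : Fin K // k' ≠ k}, z k'.1 = (g k').2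
          then c * pr p (fun ω => fun k => Z k ω) z else 0)
        = ∑ ω, if (fun j => Z j ω) = z then
            (if (W k ω, G ω) = (v, g) then p ω else 0) else 0 := by
      intro z
      rw [← hW u, ← hWZ u z]
      unfold pr
      split_ifs with hc
      · refine Finset.sum_congr rfl fun ω _ => ?_
        by_cases hzω : (fun j => Z j ω) = z
        · subst hzω
          simp [hiff, hc]
        · simp [hzω]
      · refine (Finset.sum_eq_zero fun ω _ => ?_).symm
        by_cases hzω : (fun j => Z j ω) = z
        · subst hzω
          rw [if_pos rfl, if_neg fun h => hc ((hiff ω).1 h).2]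
        · rw [if_neg hzω]
    simp_rw [hz]
    rw [Finset.sum_comm]
    unfold pr
    exact Finset.sum_congr rfl fun ω _ => by simp
  have hmarg : pr p G g = ∑ v, pr p (fun ω => (W k ω, G ω)) (v, g) := by
    unfold pr
    rw [Finset.sum_comm]
    refine Finset.sum_congr rfl fun ω _ => ?_
    by_cases h : G ω = g <;> simp [h]
  rw [hmarg, Finset.sum_congr rfl fun v _ => (hjoint v).trans (hjoint w).symm]
  simp [hG]

/-- paper's Lemma 2, inequality (17): for every user `k`,
`H({Y_i}_{i ∈ B_k} | {W_{k'}, Z_{k'}}_{k' ≠ k}) ≥ L`. -/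
theorem hsa_cutset_bound_on_Y
    {K B L : ℕ} (hK : 2 ≤ K) (hB1 : 1 ≤ B) (hBK : B ≤ K) (hL : 1 ≤ L)
    {F : Type} [Field F] [Fintype F] [DecidableEq F]
    {Ω : Type} [Fintype Ω] (p : Ω → ℝ) (hp : IsPMF p)
    {ζ χ υ : Type} [Fintype ζ] [DecidableEq ζ] [Fintype χ] [DecidableEq χ]
    [Fintype υ] [DecidableEq υ]
    (W : Fin K → Ω → (Fin L → F)) (Z : Fin K → Ω → ζ)
    (Xm : Fin K → Fin K → Ω → χ) (Y : Fin K → Ω → υ)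
    -- the inputs are i.i.d. uniform on 𝔽_q^L
    (hW : ∀ w : Fin K → Fin L → F,
      pr p (fun ω => fun k => W k ω) w = 1 / (Fintype.card F : ℝ) ^ (K * L))
    -- the inputs are independent of the keys
    (hWZ : IndepRV p (fun ω => fun k => W k ω) (fun ω => fun k => Z k ω))
    -- user messages are functions of the user's input and key
    (hX : ∀ k : Fin K,
      condEnt (Fintype.card F) p
        (fun ω => fun i : {i // i ∈ Bset K B k} => Xm k i.1 ω)
        (fun ω => (W k ω, Z k ω)) = 0)
    -- relay messages are functions of the received messages
    (hY : ∀ i : Fin K,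
      condEnt (Fintype.card F) p (Y i)
        (fun ω => fun k : {k // k ∈ Uset K B i} => Xm k.1 i ω) = 0)
    -- the server recovers the sum of the inputs
    (hRec : condEnt (Fintype.card F) p
      (fun ω => ∑ k, W k ω) (fun ω => fun i => Y i ω) = 0) :
    ∀ k : Fin K,
      condEnt (Fintype.card F) p
        (fun ω => fun i : {i // i ∈ Bset K B k} => Y i.1 ω)
        (fun ω => fun k' : {k' : Fin K // k' ≠ k} => (W k'.1 ω, Z k'.1 ω)) ≥ L := by
  intro k
  have hq : 1 < Fintype.card F := Fintype.one_lt_card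
  have hq' : (1 : ℝ) < Fintype.card F := by exact_mod_cast hq
  have hp0 := hp.1
  set G : Ω → {k' : Fin K // k' ≠ k} → (Fin L → F) × ζ := fun ω k' => (W k'.1 ω, Z k'.1 ω)
    with hG
  have hdet : ∀ ω ω', 0 < p ω → 0 < p ω' →
      ((fun i : {i // i ∈ Bset K B k} => Y i.1 ω'), G ω')
        = ((fun i : {i // i ∈ Bset K B k} => Y i.1 ω), G ω) →
      (W k ω', G ω') = (W k ω, G ω) := by
    intro ω ω' hω hω' h
    obtain ⟨hV, hGe⟩ := Prod.mk.inj h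
    have hYall : (fun i => Y i ω') = fun i => Y i ω := by
      funext i
      by_cases hi : i ∈ Bset K B k
      · exact congrFun hV ⟨i, hi⟩
      · refine eq_of_condEnt_eq_zero hq hp0 (hY i) hω hω' (funext fun j => ?_)
        have hj : i ∈ Bset K B j.1 := (Finset.mem_filter.1 j.2).2
        have hjk : j.1 ≠ k := fun he => hi (he ▸ hj)
        exact congrFun (eq_of_condEnt_eq_zero hq hp0 (hX j.1) hω hω'
          (congrFun hGe ⟨j.1, hjk⟩)) ⟨i, hj⟩
    have hsum : ∑ j, W j ω' = ∑ j, W j ω := eq_of_condEnt_eq_zero hq hp0 hRec hω hω' hYall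
    have hrest : ∑ j ∈ Finset.univ.erase k, W j ω' = ∑ j ∈ Finset.univ.erase k, W j ω :=
      Finset.sum_congr rfl fun j hj =>
        congrArg Prod.fst (congrFun hGe ⟨j, Finset.ne_of_mem_erase hj⟩)
    rw [← Finset.add_sum_erase _ _ (Finset.mem_univ k),
      ← Finset.add_sum_erase _ (fun j => W j ω) (Finset.mem_univ k), hrest] at hsum
    exact Prod.ext (add_right_cancel hsum) hGe
  have hmono := ent_le_ent_of_determines hq hp0
    (fun ω => ((fun i : {i // i ∈ Bset K B k} => Y i.1 ω), G ω))
    (fun ω => (W k ω, G ω)) hdet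
  have hchain : ent (Fintype.card F) p (fun ω => (W k ω, G ω))
      = L + ent (Fintype.card F) p G := by
    have hL' : (L : ℝ) = ∑ ω, p ω * L := by rw [← Finset.sum_mul, hp.2, one_mul]
    rw [ent_eq_sum_outcomes, ent_eq_sum_outcomes, hL', ← Finset.sum_neg_distrib,
      ← Finset.sum_neg_distrib, ← Finset.sum_add_distrib]
    refine Finset.sum_congr rfl fun ω _ => ?_
    rcases (hp0 ω).eq_or_lt with h0 | h0
    · simp [← h0]
    · have hpos := pr_self_pos hp0 (fun ω => (W k ω, G ω)) h0
      have hlog : Real.logb (Fintype.card F) (pr p G (G ω))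
          = L + Real.logb (Fintype.card F) (pr p (fun ω => (W k ω, G ω)) (W k ω, G ω)) := by
        rw [hG, pr_input_rest hW hWZ k (W k ω), Real.logb_mul (by positivity) hpos.ne',
          Real.logb_pow, Real.logb_self_eq_one hq', mul_one]
      rw [hlog]
      ring
  unfold condEnt
  linarith
end

section
/- Converse bound R_Y ≥ 1/B: in the cyclic hierarchical secure aggregation model (no security constraints needed), B · Σ_{k=1}^K H(Y_k) ≥ K · L; equivalently, the entropic relay-to-server rate R_Y^H = (Σ_{k=1}^K H(Y_k))/(K·L) satisfies R_Y^H ≥ 1/B. -/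
/-! Fix a user `k`.  Let `A` be the family of relay messages `Y_i` with `i ∈ B_k`.  A relay outside
`B_k` hears nothing from user `k`, so its message is determined by the other users' inputs and keys.
Hence `A`, the inputs of the other users and all the keys determine every `Y_i`, hence the sum of the
inputs, hence `W_k` as well.  Therefore
`H(W) + H(Z) = H(W, Z) ≤ H(A, W_{-k}, Z) ≤ H(A) + H(W_{-k}) + H(Z)`,
and `H(W) = K L`, `H(W_{-k}) ≤ (K - 1) L` give `L ≤ H(A) ≤ ∑_{i ∈ B_k} H(Y_i)` (`user_bound`).
Summing over `k` counts each relay at most `B` times (`sum_Bset_le`).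

The entropy facts rest on the formula `ent X = -∑_ω p ω log (pr X (X ω))` (`ent_eq`): it makes the
monotonicity of entropy a termwise comparison, reduces subadditivity and the bound by the
logarithm of the alphabet size to Gibbs' inequality (`ent_le_cross`), and shows that a vanishing
conditional entropy means functional dependence on the support of `p` (`det_of_condEnt`). -/

open scoped BigOperators

/-! ### Finite entropy -/

section Entropy

variable {Ω : Type} [Fintype Ω] {p : Ω → ℝ}
variable {α β : Type}

/-- `T` is a function of `X` on the support of `p`. -/
def Det (p : Ω → ℝ) (X : Ω → α) (T : Ω → β) : Prop :=
  ∀ ω ω', 0 < p ω → 0 < p ω' → X ω = X ω' → T ω = T ω'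

variable [DecidableEq α] [DecidableEq β]

lemma pr_nonneg (hp : IsPMF p) (X : Ω → α) (a : α) : 0 ≤ pr p X a :=
  Finset.sum_nonneg fun ω _ => by split_ifs <;> simp [hp.1 ω]

lemma pr_pos (hp : IsPMF p) (X : Ω → α) {ω : Ω} (h : 0 < p ω) : 0 < pr p X (X ω) := by
  refine lt_of_lt_of_le h ?_
  have := Finset.single_le_sum (s := Finset.univ)
    (f := fun ω' => if X ω' = X ω then p ω' else 0)
    (fun ω' _ => by split_ifs <;> simp [hp.1 ω']) (Finset.mem_univ ω)
  simpa [pr] using this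

/-- On the support, the level sets of `X` sit inside those of `T`. -/
lemma pr_le_of_det (hp : IsPMF p) {X : Ω → α} {T : Ω → β} (h : Det p X T) {ω : Ω}
    (hω : 0 < p ω) : pr p X (X ω) ≤ pr p T (T ω) := by
  refine Finset.sum_le_sum fun ω' _ => ?_
  rcases (hp.1 ω').eq_or_lt with h0 | h0
  · simp [← h0]
  · by_cases hx : X ω' = X ω
    · simp [hx, h ω' ω h0 hω hx]
    · simp only [hx, if_false]
      split_ifs <;> simp [h0.le]

variable [Fintype α] [Fintype β]

lemma sum_pr_mul (p : Ω → ℝ) (X : Ω → α) (f : α → ℝ) :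
    ∑ a, pr p X a * f a = ∑ ω, p ω * f (X ω) := by
  simp only [pr, Finset.sum_mul]
  rw [Finset.sum_comm]
  refine Finset.sum_congr rfl fun ω _ => ?_
  simp [ite_mul]

lemma sum_pr (hp : IsPMF p) (X : Ω → α) : ∑ a, pr p X a = 1 := by
  have := sum_pr_mul p X (fun _ => 1)
  simpa [hp.2] using this

lemma pr_le_one (hp : IsPMF p) (X : Ω → α) (a : α) : pr p X a ≤ 1 := by
  rw [← sum_pr hp X]
  exact Finset.single_le_sum (fun b _ => pr_nonneg hp X b) (Finset.mem_univ a)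

lemma ent_eq (q : ℕ) (p : Ω → ℝ) (X : Ω → α) :
    ent q p X = -∑ ω, p ω * Real.logb q (pr p X (X ω)) := by
  rw [ent, sum_pr_mul p X fun a => Real.logb q (pr p X a)]

lemma ent_nonneg {q : ℕ} (hq : 1 < q) (hp : IsPMF p) (X : Ω → α) : 0 ≤ ent q p X := by
  rw [ent, neg_nonneg]
  exact Finset.sum_nonpos fun a _ => mul_nonpos_of_nonneg_of_nonpos (pr_nonneg hp X a)
    (Real.logb_nonpos (by exact_mod_cast hq) (pr_nonneg hp X a) (pr_le_one hp X a))

/-- Gibbs' inequality: entropy is at most the cross entropy with respect to any subprobability `r`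
that is positive on the support. -/
lemma ent_le_cross {q : ℕ} (hq : 1 < q) (hp : IsPMF p) (X : Ω → α) (r : α → ℝ)
    (hr0 : ∀ a, 0 ≤ r a) (hr : ∀ ω, 0 < p ω → 0 < r (X ω)) (hr1 : ∑ a, r a ≤ 1) :
    ent q p X ≤ -∑ ω, p ω * Real.logb q (r (X ω)) := by
  have hq' : 0 < Real.log q := Real.log_pos (by exact_mod_cast hq)
  rw [ent_eq, neg_le_neg_iff, ← sub_nonpos, ← Finset.sum_sub_distrib]
  have key : ∀ ω, p ω * Real.logb q (r (X ω)) - p ω * Real.logb q (pr p X (X ω)) ≤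
      (p ω * (r (X ω) / pr p X (X ω)) - p ω) / Real.log q := by
    intro ω
    rcases (hp.1 ω).eq_or_lt with h | h
    · simp [← h]
    have h1 := hr ω h
    have h2 := pr_pos hp X h
    have h3 := Real.log_le_sub_one_of_pos (div_pos h1 h2)
    rw [Real.log_div h1.ne' h2.ne'] at h3
    rw [le_div_iff₀ hq']
    have : (p ω * Real.logb q (r (X ω)) - p ω * Real.logb q (pr p X (X ω))) * Real.log q
        = p ω * (Real.log (r (X ω)) - Real.log (pr p X (X ω))) := by
      simp only [Real.logb]; field_simp
    rw [this]
    nlinarith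
  refine (Finset.sum_le_sum fun ω _ => key ω).trans ?_
  rw [← Finset.sum_div, Finset.sum_sub_distrib, hp.2, ← sum_pr_mul p X fun a => r a / pr p X a]
  refine div_nonpos_of_nonpos_of_nonneg ?_ hq'.le
  have : ∑ a, pr p X a * (r a / pr p X a) ≤ ∑ a, r a := by
    refine Finset.sum_le_sum fun a _ => ?_
    by_cases h : pr p X a = 0
    · simp [h, hr0 a]
    · rw [mul_div_cancel₀ _ h]
  linarith

lemma ent_pair_le {q : ℕ} (hq : 1 < q) (hp : IsPMF p) (X : Ω → α) (Y : Ω → β) :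
    ent q p (fun ω => (X ω, Y ω)) ≤ ent q p X + ent q p Y := by
  refine (ent_le_cross hq hp (fun ω => (X ω, Y ω)) (fun c => pr p X c.1 * pr p Y c.2)
    (fun c => mul_nonneg (pr_nonneg hp X _) (pr_nonneg hp Y _))
    (fun ω h => mul_pos (pr_pos hp X h) (pr_pos hp Y h)) ?_).trans_eq ?_
  · rw [Fintype.sum_prod_type]
    simp [← Finset.mul_sum, sum_pr hp]
  · rw [ent_eq, ent_eq, ← neg_add, ← Finset.sum_add_distrib]
    congr 1
    refine Finset.sum_congr rfl fun ω _ => ?_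
    rcases (hp.1 ω).eq_or_lt with h | h
    · simp [← h]
    · rw [Real.logb_mul (pr_pos hp X h).ne' (pr_pos hp Y h).ne', mul_add]

lemma ent_pair_of_indep (q : ℕ) (hp : IsPMF p) (X : Ω → α) (Y : Ω → β) (h : IndepRV p X Y) :
    ent q p (fun ω => (X ω, Y ω)) = ent q p X + ent q p Y := by
  rw [ent_eq, ent_eq, ent_eq, ← neg_add, ← Finset.sum_add_distrib]
  congr 1
  refine Finset.sum_congr rfl fun ω _ => ?_
  rcases (hp.1 ω).eq_or_lt with h0 | h0
  · simp [← h0]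
  · rw [h, Real.logb_mul (pr_pos hp X h0).ne' (pr_pos hp Y h0).ne', mul_add]

lemma ent_le_log_card {q : ℕ} (hq : 1 < q) (hp : IsPMF p) (X : Ω → α) :
    ent q p X ≤ Real.logb q (Fintype.card α) := by
  obtain ⟨ω₀⟩ : Nonempty Ω := by
    by_contra h
    rw [not_nonempty_iff] at h
    simpa using hp.2
  have hc : (0 : ℝ) < Fintype.card α := by
    exact_mod_cast Fintype.card_pos_iff.2 ⟨X ω₀⟩
  refine (ent_le_cross hq hp X (fun _ => (Fintype.card α : ℝ)⁻¹) (fun _ => by positivity)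
    (fun _ _ => by positivity) ?_).trans_eq ?_
  · simp [hc.ne']
  · simp [← Finset.sum_mul, hp.2, Real.logb_inv]

lemma ent_mono {q : ℕ} (hq : 1 < q) (hp : IsPMF p) {X : Ω → α} {T : Ω → β} (h : Det p X T) :
    ent q p T ≤ ent q p X := by
  rw [ent_eq, ent_eq, neg_le_neg_iff]
  refine Finset.sum_le_sum fun ω _ => ?_
  rcases (hp.1 ω).eq_or_lt with h0 | h0
  · simp [← h0]
  · exact mul_le_mul_of_nonneg_left (Real.logb_le_logb_of_le (by exact_mod_cast hq)
      (pr_pos hp X h0) (pr_le_of_det hp h h0)) h0.le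

/-- Vanishing conditional entropy forces `pr Y = pr (X, Y)` along the support, so no outcome of
positive mass shares the value of `Y` while differing in `X`. -/
lemma det_of_condEnt {q : ℕ} (hq : 1 < q) (hp : IsPMF p) {X : Ω → α} {Y : Ω → β}
    (h : condEnt q p X Y = 0) : Det p Y X := by
  have hq' : (1 : ℝ) < q := by exact_mod_cast hq
  have hd : Det p (fun ω => (X ω, Y ω)) Y := fun _ _ _ _ e => (Prod.ext_iff.1 e).2
  rw [condEnt, ent_eq, ent_eq, sub_eq_zero, neg_inj] at h
  have hle : ∀ ω ∈ Finset.univ,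
      p ω * Real.logb q (pr p (fun ω => (X ω, Y ω)) (X ω, Y ω)) ≤
        p ω * Real.logb q (pr p Y (Y ω)) := by
    intro ω _
    rcases (hp.1 ω).eq_or_lt with h0 | h0
    · simp [← h0]
    · exact mul_le_mul_of_nonneg_left (Real.logb_le_logb_of_le hq'
        (pr_pos hp (fun ω => (X ω, Y ω)) h0) (pr_le_of_det hp hd h0)) h0.le
  have heq := (Finset.sum_eq_sum_iff_of_le hle).1 h
  intro ω ω' hω hω' hY
  have h1 := mul_left_cancel₀ hω.ne' (heq ω (Finset.mem_univ _))
  have h2 : pr p (fun ω => (X ω, Y ω)) (X ω, Y ω) = pr p Y (Y ω) :=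
    Real.logb_injOn_pos hq' (pr_pos hp (fun ω => (X ω, Y ω)) hω) (pr_pos hp Y hω) h1
  have h3 := (Finset.sum_eq_sum_iff_of_le (s := Finset.univ)
    (f := fun ν => if (X ν, Y ν) = (X ω, Y ω) then p ν else 0)
    (g := fun ν => if Y ν = Y ω then p ν else 0) (fun ν _ => by
      have := hp.1 ν
      by_cases hx : X ν = X ω <;> by_cases hy : Y ν = Y ω <;> simp [hx, hy, this])).1 h2
      ω' (Finset.mem_univ _)
  by_contra hne
  have hne' : ¬ X ω' = X ω := fun e => hne e.symm
  simp only [Prod.mk.injEq, hne', false_and, if_false, hY, if_true] at h3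
  exact hω'.ne h3

lemma ent_family_le {q : ℕ} (hq : 1 < q) (hp : IsPMF p) {ι : Type} [DecidableEq ι]
    (Y : ι → Ω → α) (S : Finset ι) :
    ent q p (fun ω => fun i : {i // i ∈ S} => Y i.1 ω) ≤ ∑ i ∈ S, ent q p (Y i) := by
  induction S using Finset.induction_on with
  | empty =>
    refine (ent_le_log_card hq hp _).trans ?_
    simp
  | insert a S ha ih =>
    rw [Finset.sum_insert ha]
    have h1 : Det p (fun ω => (Y a ω, fun i : {i // i ∈ S} => Y i.1 ω))
        (fun ω => fun i : {i // i ∈ insert a S} => Y i.1 ω) := by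
      intro ω ω' _ _ e
      obtain ⟨e1, e2⟩ := Prod.ext_iff.1 e
      funext ⟨i, hi⟩
      rcases Finset.mem_insert.1 hi with rfl | hi
      · exact e1
      · exact congrFun e2 ⟨i, hi⟩
    exact (ent_mono hq hp h1).trans ((ent_pair_le hq hp _ _).trans (by gcongr))

end Entropy

/-! ### Counting relays and the cut at one user -/

/-- Each relay lies in at most `B` of the sets `B_k`: for fixed `j`, the relay `k + j` runs through
all relays exactly once as `k` does. -/
lemma sum_Bset_le {K : ℕ} (hK : 2 ≤ K) (B : ℕ) (h : Fin K → ℝ) (h0 : ∀ i, 0 ≤ h i) :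
    ∑ k, ∑ i ∈ Bset K B k, h i ≤ B * ∑ i, h i := by
  have : NeZero K := ⟨by omega⟩
  have h1 : ∀ k : Fin K, ∑ i ∈ Bset K B k, h i ≤
      ∑ j ∈ Finset.range B, h (k + Fin.ofNat K j) := by
    intro k
    have hB : Bset K B k = (Finset.range B).image fun j => k + Fin.ofNat K j := by
      refine Finset.image_congr fun j _ => Fin.ext ?_
      simp [Fin.val_add]
    rw [hB]
    exact Finset.sum_image_le_of_nonneg (fun i _ => h0 i)
  refine (Finset.sum_le_sum fun k _ => h1 k).trans_eq ?_
  rw [Finset.sum_comm]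
  have h2 : ∀ j, ∑ k : Fin K, h (k + Fin.ofNat K j) = ∑ i, h i := fun j =>
    Equiv.sum_comp (Equiv.addRight (Fin.ofNat K j)) h
  simp only [h2, Finset.sum_const, Finset.card_range, nsmul_eq_mul]

/-- The cut around a single user: the relays serving user `k` must carry the `L` symbols of its
input. -/
lemma user_bound
    {K B L : ℕ} (hK : 2 ≤ K)
    {F : Type} [Field F] [Fintype F] [DecidableEq F]
    {Ω : Type} [Fintype Ω] (p : Ω → ℝ) (hp : IsPMF p)
    {ζ χ υ : Type} [Fintype ζ] [DecidableEq ζ] [Fintype χ] [DecidableEq χ]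
    [Fintype υ] [DecidableEq υ]
    (W : Fin K → Ω → (Fin L → F)) (Z : Fin K → Ω → ζ)
    (Xm : Fin K → Fin K → Ω → χ) (Y : Fin K → Ω → υ)
    (hW : ∀ w : Fin K → Fin L → F,
      pr p (fun ω => fun k => W k ω) w = 1 / (Fintype.card F : ℝ) ^ (K * L))
    (hWZ : IndepRV p (fun ω => fun k => W k ω) (fun ω => fun k => Z k ω))
    (hX : ∀ k : Fin K,
      condEnt (Fintype.card F) p
        (fun ω => fun i : {i // i ∈ Bset K B k} => Xm k i.1 ω)
        (fun ω => (W k ω, Z k ω)) = 0)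
    (hY : ∀ i : Fin K,
      condEnt (Fintype.card F) p (Y i)
        (fun ω => fun k : {k // k ∈ Uset K B i} => Xm k.1 i ω) = 0)
    (hRec : condEnt (Fintype.card F) p
      (fun ω => ∑ k, W k ω) (fun ω => fun i => Y i ω) = 0) (k : Fin K) :
    (L : ℝ) ≤ ∑ i ∈ Bset K B k, ent (Fintype.card F) p (Y i) := by
  have hq : 1 < Fintype.card F := Fintype.one_lt_card
  have hq' : (1 : ℝ) < Fintype.card F := by exact_mod_cast hq
  set A : Ω → ({i // i ∈ Bset K B k} → υ) := fun ω i => Y i.1 ω with hA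
  set V : Ω → ({j // j ≠ k} → Fin L → F) := fun ω j => W j.1 ω with hV
  set WW : Ω → (Fin K → Fin L → F) := fun ω j => W j ω with hWW
  set ZZ : Ω → (Fin K → ζ) := fun ω j => Z j ω with hZZ
  have hdet : Det p (fun ω => (A ω, (V ω, ZZ ω))) (fun ω => (WW ω, ZZ ω)) := by
    intro ω ω' hω hω' e
    simp only [Prod.mk.injEq] at e
    obtain ⟨eA, eV, eZ⟩ := e
    have eW : ∀ j, j ≠ k → W j ω = W j ω' := fun j hj => congrFun eV ⟨j, hj⟩
    have eX : ∀ j, j ≠ k → ∀ i ∈ Bset K B j, Xm j i ω = Xm j i ω' := fun j hj i hi =>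
      congrFun (det_of_condEnt hq hp (hX j) ω ω' hω hω'
        (Prod.ext (eW j hj) (congrFun eZ j))) ⟨i, hi⟩
    have eY : ∀ i, Y i ω = Y i ω' := by
      intro i
      by_cases hi : i ∈ Bset K B k
      · exact congrFun eA ⟨i, hi⟩
      · refine det_of_condEnt hq hp (hY i) ω ω' hω hω' (funext fun ⟨j, hj⟩ => ?_)
        have hj' : i ∈ Bset K B j := (Finset.mem_filter.1 hj).2
        exact eX j (fun h => hi (h ▸ hj')) i hj'
    have eS : ∑ j, W j ω = ∑ j, W j ω' :=
      det_of_condEnt hq hp hRec ω ω' hω hω' (funext eY)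
    rw [← Finset.add_sum_erase _ _ (Finset.mem_univ k),
      ← Finset.add_sum_erase _ (fun j => W j ω') (Finset.mem_univ k),
      Finset.sum_congr rfl fun j hj => eW j (Finset.ne_of_mem_erase hj)] at eS
    refine Prod.ext (funext fun j => ?_) eZ
    by_cases hj : j = k
    · subst hj
      exact add_right_cancel eS
    · exact eW j hj
  have hWent : ent (Fintype.card F) p WW = K * L := by
    have hb : Real.logb (Fintype.card F) (Fintype.card F : ℝ) = 1 :=
      Real.logb_self_eq_one hq'
    rw [ent_eq]
    simp only [hW, one_div, Real.logb_inv, Real.logb_pow, hb]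
    rw [← Finset.sum_mul, hp.2]
    push_cast
    ring
  have hVent : ent (Fintype.card F) p V ≤ (K - 1) * L := by
    refine (ent_le_log_card hq hp V).trans_eq ?_
    have hb : Real.logb (Fintype.card F) (Fintype.card F : ℝ) = 1 :=
      Real.logb_self_eq_one hq'
    have hc : Fintype.card {j : Fin K // j ≠ k} = K - 1 := by
      simp [Fintype.card_subtype_compl]
    rw [Fintype.card_fun, Fintype.card_fun, hc, Fintype.card_fin]
    push_cast
    rw [Real.logb_pow, Real.logb_pow, hb, Nat.cast_sub (by omega)]
    push_cast
    ring
  have h1 := ent_mono hq hp hdet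
  rw [ent_pair_of_indep _ hp WW ZZ hWZ, hWent] at h1
  have h2 := ent_pair_le hq hp A (fun ω => (V ω, ZZ ω))
  have h3 := ent_pair_le hq hp V ZZ
  have h4 := ent_family_le hq hp Y (Bset K B k)
  linarith

/-- converse bound `R_Y ≥ 1/B`: `B · Σ_{k=1}^K H(Y_k) ≥ K · L`, i.e. the
entropic relay-to-server rate `R_Y^H = (Σ_k H(Y_k))/(K·L)` satisfies `R_Y^H ≥ 1/B`. -/
theorem hsa_RY_ge_one_div_B
    {K B L : ℕ} (hK : 2 ≤ K) (hB1 : 1 ≤ B) (hBK : B ≤ K) (hL : 1 ≤ L)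
    {F : Type} [Field F] [Fintype F] [DecidableEq F]
    {Ω : Type} [Fintype Ω] (p : Ω → ℝ) (hp : IsPMF p)
    {ζ χ υ : Type} [Fintype ζ] [DecidableEq ζ] [Fintype χ] [DecidableEq χ]
    [Fintype υ] [DecidableEq υ]
    (W : Fin K → Ω → (Fin L → F)) (Z : Fin K → Ω → ζ)
    (Xm : Fin K → Fin K → Ω → χ) (Y : Fin K → Ω → υ)
    -- the inputs are i.i.d. uniform on 𝔽_q^L
    (hW : ∀ w : Fin K → Fin L → F,
      pr p (fun ω => fun k => W k ω) w = 1 / (Fintype.card F : ℝ) ^ (K * L))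
    -- the inputs are independent of the keys
    (hWZ : IndepRV p (fun ω => fun k => W k ω) (fun ω => fun k => Z k ω))
    -- user messages are functions of the user's input and key
    (hX : ∀ k : Fin K,
      condEnt (Fintype.card F) p
        (fun ω => fun i : {i // i ∈ Bset K B k} => Xm k i.1 ω)
        (fun ω => (W k ω, Z k ω)) = 0)
    -- relay messages are functions of the received messages
    (hY : ∀ i : Fin K,
      condEnt (Fintype.card F) p (Y i)
        (fun ω => fun k : {k // k ∈ Uset K B i} => Xm k.1 i ω) = 0)
    -- the server recovers the sum of the inputs
    (hRec : condEnt (Fintype.card F) p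
      (fun ω => ∑ k, W k ω) (fun ω => fun i => Y i ω) = 0) :
    (B : ℝ) * (∑ k, ent (Fintype.card F) p (Y k)) ≥ (K : ℝ) * L := by
  have h := sum_Bset_le hK B (fun i => ent (Fintype.card F) p (Y i))
    (fun i => ent_nonneg Fintype.one_lt_card hp (Y i))
  have h1 : ∑ _k : Fin K, (L : ℝ) ≤ ∑ k, ∑ i ∈ Bset K B k, ent (Fintype.card F) p (Y i) :=
    Finset.sum_le_sum fun k _ => user_bound hK p hp W Z Xm Y hW hWZ hX hY hRec k
  simp only [Finset.sum_const, Finset.card_univ, Fintype.card_fin, nsmul_eq_mul] at h1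
  exact h1.trans h
end
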